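/- arXiv:2002.06671 — 4 statements merged into one kernel-verified Lean document; each statement's English description precedes it below -/
import Mathlib

section
/- Let 𝔾 be a groupoid. The functor κ : 𝔾 ⥤ F𝔾 which sends an object g of 𝔾 to the identity morphism Id_g (regarded as an object of F𝔾), and sends a morphism η : g → h of 𝔾 to the morphism (η⁻¹, η) : Id_g → Id_h of F𝔾 (this is a valid morphism since Id_h = η ∘ Id_g ∘ η⁻¹), is an equivalence of categories. -/
/-!
The functor `κ` is faithful because `η` is a component of `κ(η)`. It is full because the
factorization condition on a morphism `(ξ, η)` between identities reads `η ∘ ξ = Id`, which forces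
`ξ = η⁻¹` in a groupoid. It is essentially surjective because every `α : i ⟶ j` is isomorphic
to `Id_j` through `(α, Id_j)`.
-/

open CategoryTheory

universe v u

/-- The category of factorizations `F I` of a category `I`: objects are morphisms of `I`. -/
structure Factorization (I : Type u) [Category.{v} I] : Type max u v where
  left : I
  right : I
  hom : left ⟶ right

namespace Factorization

variable {I : Type u} [Category.{v} I]

/-- A morphism in `F I` from `α : i ⟶ j` to `β : k ⟶ l` is a pair `(ξ, η)` with
`ξ : k ⟶ i`, `η : j ⟶ l` such that `β = η ∘ α ∘ ξ` (i.e. `β = ξ ≫ α ≫ η`). -/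
@[ext]
structure Hom (α β : Factorization I) where
  ξ : β.left ⟶ α.left
  η : α.right ⟶ β.right
  fac : β.hom = ξ ≫ α.hom ≫ η := by aesop_cat

instance : Category (Factorization I) where
  Hom α β := Hom α β
  id α := { ξ := 𝟙 _, η := 𝟙 _ }
  comp f g := { ξ := g.ξ ≫ f.ξ, η := f.η ≫ g.η,
                fac := by rw [g.fac, f.fac]; simp }
  id_comp f := by apply Hom.ext <;> simp
  comp_id f := by apply Hom.ext <;> simp
  assoc f g h := by apply Hom.ext <;> simp

@[simp] lemma id_ξ (α : Factorization I) : Hom.ξ (𝟙 α) = 𝟙 α.left := rfl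
@[simp] lemma id_η (α : Factorization I) : Hom.η (𝟙 α) = 𝟙 α.right := rfl
@[simp] lemma comp_ξ {α β γ : Factorization I} (f : α ⟶ β) (g : β ⟶ γ) :
    Hom.ξ (f ≫ g) = g.ξ ≫ f.ξ := rfl
@[simp] lemma comp_η {α β γ : Factorization I} (f : α ⟶ β) (g : β ⟶ γ) :
    Hom.η (f ≫ g) = f.η ≫ g.η := rfl

end Factorization

/-- For a groupoid `𝔾`, the functor `κ : 𝔾 ⥤ F𝔾` sending `g` to `Id_g` and a morphism
`η : g ⟶ h` to the morphism `(η⁻¹, η) : Id_g ⟶ Id_h`. -/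
def kappa (G : Type u) [Groupoid.{v} G] : G ⥤ Factorization G where
  obj g := ⟨g, g, 𝟙 g⟩
  map {g h} η := { ξ := Groupoid.inv η, η := η, fac := by simp }
  map_id g := by apply Factorization.Hom.ext <;> simp
  map_comp f g := by apply Factorization.Hom.ext <;> simp

/-- The hypothesis is the factorization condition on a morphism `(ξ, η) : κ g ⟶ κ h`. -/
lemma inv_eq_of_fac {G : Type u} [Groupoid.{v} G] {g h : G} (ξ : h ⟶ g) (η : g ⟶ h)
    (fac : 𝟙 h = ξ ≫ 𝟙 g ≫ η) : Groupoid.inv η = ξ := by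
  rw [Category.id_comp] at fac
  rw [← Category.id_comp (Groupoid.inv η), fac, Category.assoc, Groupoid.comp_inv,
    Category.comp_id]

/-- For a groupoid `𝔾`, the functor `κ : 𝔾 ⥤ F𝔾` is an equivalence of categories. -/
theorem kappa_isEquivalence (G : Type u) [Groupoid.{v} G] :
    (kappa G).IsEquivalence := by
  refine { faithful := ⟨fun h => congrArg Factorization.Hom.η h⟩, full := ⟨?_⟩, essSurj := ⟨?_⟩ }
  · intro g h f
    exact ⟨f.η, Factorization.Hom.ext (inv_eq_of_fac f.ξ f.η f.fac) rfl⟩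
  · intro α
    -- `(α, 𝟙) : Id ⟶ α`, based at the codomain of `α`, is invertible with inverse `(α⁻¹, 𝟙)`.
    exact ⟨α.right, ⟨{
      hom := { ξ := α.hom, η := 𝟙 _, fac := by simp [kappa] }
      inv := { ξ := Groupoid.inv α.hom, η := 𝟙 _, fac := by simp [kappa] }
      hom_inv_id := Factorization.Hom.ext (Groupoid.inv_comp α.hom) (Category.id_comp _)
      inv_hom_id := Factorization.Hom.ext (Groupoid.comp_inv α.hom) (Category.id_comp _) }⟩⟩
end

section
/- Let C and D be monoidal categories and let F : C ⥤ D be a monoidal functor whose underlying functor is an equivalence of categories. Then any two monoidal natural automorphisms α, β : F ⟹ F commute under vertical composition: β ∘ α = α ∘ β. -/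
open CategoryTheory

universe v₁ v₂ u₁ u₂

/-- If `F : C ⥤ D` is a monoidal functor between monoidal categories whose underlying
functor is an equivalence of categories, then any two monoidal natural automorphisms
`α, β : F ⟹ F` commute under vertical composition. -/
theorem monoidalNatAut_comm
    {C : Type u₁} [Category.{v₁} C] [MonoidalCategory C]
    {D : Type u₂} [Category.{v₂} D] [MonoidalCategory D]
    (F : C ⥤ D) [F.Monoidal] [F.Full] [F.Faithful] [F.EssSurj]
    (α β : F ⟶ F) [NatTrans.IsMonoidal α] [NatTrans.IsMonoidal β]
    (hα : ∀ X : C, IsIso (α.app X)) (hβ : ∀ X : C, IsIso (β.app X)) :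
    α ≫ β = β ≫ α := by
  ext X
  -- By fullness `β.app X` is `F.map f` for some `f : X ⟶ X`; apply naturality of `α` to `f`.
  obtain ⟨f, hf⟩ := F.map_surjective (β.app X)
  rw [NatTrans.comp_app, NatTrans.comp_app, ← hf]
  exact (α.naturality f).symm
end

section
/- Let δ : T → R be a crossed module, M = ker δ, G = R / im δ with quotient map p : R → G, and let M carry the G-module structure induced by the action of R on T. Choose functions s : G → R and σ : G × G → T satisfying p(s(x)) = x and s(x) * s(y) = δ(σ(x, y)) * s(x * y) for all x, y ∈ G. Then the function f : G × G × G → T defined by f(x, y, z) = (s(x) • σ(y, z)) * σ(x, y*z) * σ(x*y, z)⁻¹ * σ(x, y)⁻¹ takes values in M, and f is a 3-cocycle of G with coefficients in the G-module M: for all x, y, z, w ∈ G one has (x • f(y, z, w)) * f(x, y*z, w) * f(x, y, z) = f(x*y, z, w) * f(x, y, z*w). -/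
/-!
Bracketing `s x * s y * s z` in two ways gives two elements of `T` relating it to `s (x * y * z)`,
and `f x y z` is their discrepancy:
`(s x • σ y z) * σ x (y * z) = f x y z * σ x y * σ (x * y) z`, and applying `δ` to it shows that
`δ (f x y z) = 1` by associativity in `R` and `G`. Elements of `ker δ` are central by the Peiffer
identity `δ t • u = t * u * t⁻¹`. For the cocycle identity, the element
`(s x • s y • σ z w) * (s x • σ y (z * w)) * σ x (y * z * w)` is rewritten in two ways as an
element of `ker δ` times `σ x y * σ (x * y) z * σ (x * y * z) w`; the two elements of `ker δ` are
the two sides of the identity.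
-/

/-- For a crossed module `δ : T → R` with `M = ker δ`, `G = R / im δ` and quotient map
`p : R → G`, given `s : G → R` and `σ : G × G → T` with `p (s x) = x` and
`s x * s y = δ (σ x y) * s (x * y)`, the function
`f (x, y, z) = (s x • σ (y, z)) * σ (x, y*z) * σ (x*y, z)⁻¹ * σ (x, y)⁻¹`
takes values in `M = ker δ` and is a `3`-cocycle of `G` with coefficients in the
`G`-module `M` (where `x ∈ G` acts on `M` as `s x` does):
`(x • f (y, z, w)) * f (x, y*z, w) * f (x, y, z) = f (x*y, z, w) * f (x, y, z*w)`. -/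
theorem crossedModule_threeCocycle
    {T R : Type*} [Group T] [Group R] [MulDistribMulAction R T]
    (δ : T →* R)
    (h₁ : ∀ (r : R) (t : T), δ (r • t) = r * δ t * r⁻¹)
    (h₂ : ∀ t s : T, δ t • s = t * s * t⁻¹)
    [δ.range.Normal]
    (s : R ⧸ δ.range → R) (σ : R ⧸ δ.range → R ⧸ δ.range → T)
    (hs : ∀ x, QuotientGroup.mk' δ.range (s x) = x)
    (hσ : ∀ x y, s x * s y = δ (σ x y) * s (x * y))
    (f : R ⧸ δ.range → R ⧸ δ.range → R ⧸ δ.range → T)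
    (hf : ∀ x y z, f x y z = (s x • σ y z) * σ x (y * z) * (σ (x * y) z)⁻¹ * (σ x y)⁻¹) :
    (∀ x y z, f x y z ∈ δ.ker) ∧
    (∀ x y z w,
      (s x • f y z w) * f x (y * z) w * f x y z = f (x * y) z w * f x y (z * w)) := by
  have hd : ∀ x y, δ (σ x y) = s x * s y * (s (x * y))⁻¹ := fun x y => by
    rw [hσ, mul_inv_cancel_right]
  have hker : ∀ x y z, δ (f x y z) = 1 := fun x y z => by
    simp only [hf, map_mul, map_inv, h₁, hd, mul_assoc x y z]
    group
  have central : ∀ m : T, δ m = 1 → ∀ t, t * m = m * t := fun m hm t => by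
    have h := h₂ m t
    rw [hm, one_smul, eq_mul_inv_iff_mul_eq] at h
    exact h
  have hrel : ∀ x y z,
      (s x • σ y z) * σ x (y * z) = f x y z * (σ x y * σ (x * y) z) := fun x y z => by
    rw [hf]; group
  have hact : ∀ x y t, (s x • s y • t) * σ x y = σ x y * (s (x * y) • t) := fun x y t => by
    rw [← mul_smul, hσ, mul_smul, h₂, inv_mul_cancel_right]
  refine ⟨fun x y z => MonoidHom.mem_ker.2 (hker x y z), fun x y z w => ?_⟩
  -- Collapse the first two factors `s x • (s y • σ z w * σ y (z * w))` first.
  have left : (s x • s y • σ z w) * (s x • σ y (z * w)) * σ x (y * z * w) =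
      (s x • f y z w) * f x (y * z) w * f x y z * (σ x y * σ (x * y) z * σ (x * y * z) w) := by
    have e := hrel x (y * z) w
    rw [← mul_assoc x y z] at e
    calc _ = (s x • f y z w) * (s x • σ y z) * ((s x • σ (y * z) w) * σ x (y * z * w)) := by
          rw [← smul_mul', hrel, smul_mul', smul_mul']; simp only [mul_assoc]
      _ = (s x • f y z w) * ((s x • σ y z) * f x (y * z) w) *
            (σ x (y * z) * σ (x * y * z) w) := by
          rw [e]; simp only [mul_assoc]
      _ = (s x • f y z w) * f x (y * z) w * ((s x • σ y z) * σ x (y * z)) *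
            σ (x * y * z) w := by
          rw [central _ (hker x (y * z) w)]; simp only [mul_assoc]
      _ = _ := by rw [hrel]; simp only [mul_assoc]
  -- Collapse the last two factors first, then move `s x • s y •` past `σ x y`.
  have right : (s x • s y • σ z w) * (s x • σ y (z * w)) * σ x (y * z * w) =
      f (x * y) z w * f x y (z * w) * (σ x y * σ (x * y) z * σ (x * y * z) w) := by
    have e := hrel x y (z * w)
    rw [← mul_assoc y z w] at e
    calc _ = (s x • s y • σ z w) * f x y (z * w) * (σ x y * σ (x * y) (z * w)) := by
          rw [mul_assoc, e, mul_assoc]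
      _ = f x y (z * w) * ((s x • s y • σ z w) * σ x y) * σ (x * y) (z * w) := by
          rw [central _ (hker x y (z * w))]; simp only [mul_assoc]
      _ = f x y (z * w) * (σ x y * ((s (x * y) • σ z w) * σ (x * y) (z * w))) := by
          rw [hact]; simp only [mul_assoc]
      _ = f x y (z * w) * ((σ x y * f (x * y) z w) * (σ (x * y) z * σ (x * y * z) w)) := by
          rw [hrel]; simp only [mul_assoc]
      _ = f x y (z * w) * f (x * y) z w * (σ x y * σ (x * y) z * σ (x * y * z) w) := by
          rw [central _ (hker (x * y) z w)]; simp only [mul_assoc]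
      _ = _ := by rw [central _ (hker (x * y) z w)]
  exact mul_right_cancel (left.symm.trans right)
end

section
/- (Eilenberg–MacLane) Let Π and G be groups and η : Π → Out(G) a group homomorphism (an abstract kernel). Choose functions s : Π → Aut(G) with π(s(x)) = η(x) for all x ∈ Π, and σ : Π × Π → G with s(x) ∘ s(y) = c(σ(x, y)) ∘ s(x*y) for all x, y ∈ Π, where c(g) denotes conjugation by g (such s and σ exist). Then the function f : Π × Π × Π → G defined by f(x, y, z) = s(x)(σ(y, z)) * σ(x, y*z) * σ(x*y, z)⁻¹ * σ(x, y)⁻¹ takes values in the centre Z(G), which is a Π-module via η (x • z = φ(z) for any φ ∈ Aut(G) with π(φ) = η(x), well-defined since inner automorphisms fix Z(G) pointwise). The theorem states: there exists a group extension 1 → G → B → Π → 1 whose induced conjugation class equals η if and only if f is a 3-coboundary, i.e. there exists a function ρ : Π × Π → Z(G) with f(x, y, z) = (x • ρ(y, z)) * ρ(x, y*z) * ρ(x*y, z)⁻¹ * ρ(x, y)⁻¹ for all x, y, z ∈ Π. -/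
/-!
Write `δσ (x, y, z) = s x (σ (y, z)) * σ (x, y*z) * σ (x*y, z)⁻¹ * σ (x, y)⁻¹`, so that `f = δσ`.

* Expanding `s x * s y * s z` in two ways shows that conjugation by `δσ (x, y, z)` is trivial.
* If `σ = ρ * τ` with `ρ` central, then `δσ = δρ * δτ` (`coboundary_mul`). Hence `f` is a coboundary
  of a central cochain if and only if `σ` can be changed by a central cochain to a `τ` with `δτ = 1`.
* Given an extension `B`, lift each `x` to `t x ∈ B` inducing exactly the automorphism `s x`
  (`exists_lift`). Then `t x * t y = κ (τ (x, y)) * t (x*y)` defines `τ`; it satisfies `δτ = 1` by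
  associativity in `B`, and it differs from `σ` by a central cochain, because both implement
  the same conjugation.
* Conversely, a `τ` with `δτ = 1` makes `G × P` a group (`FactorSet.Total`) under
  `(g, x) * (h, y) = (g * s x h * τ (x, y), x * y)`. No normalization of `τ` is assumed, so the unit is
  `(τ (1, 1)⁻¹, 1)` and `G` embeds by `g ↦ (g * τ (1, 1)⁻¹, 1)`.
-/

universe u v

/-- The subgroup `Inn(G)` of inner automorphisms (the range of `MulAut.conj`) is a normal
subgroup of `Aut(G)`, so that `Out(G) = Aut(G)/Inn(G)` is a group. -/
instance MulAut.conj_range_normal (G : Type*) [Group G] :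
    (MulAut.conj (G := G)).range.Normal := by
  constructor
  intro n hn φ
  obtain ⟨g, rfl⟩ := hn
  refine ⟨φ g, ?_⟩
  ext x
  simp [MulAut.conj_apply, mul_assoc]

namespace EilenbergMacLane

section

variable {P : Type*} {G : Type*} [Group P] [Group G]

/-- Multiplicativity of the coboundary formula under a change by central factors `b`, `c`, `d`. -/
theorem coboundary_mul {a b c d w x y z : G} (hb : b ∈ Subgroup.center G)
    (hc : c ∈ Subgroup.center G) (hd : d ∈ Subgroup.center G) :
    (a * w) * (b * x) * (c * y)⁻¹ * (d * z)⁻¹ =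
      (a * b * c⁻¹ * d⁻¹) * (w * x * y⁻¹ * z⁻¹) := by
  have comm : ∀ {e : G}, e ∈ Subgroup.center G → ∀ g, Commute g e :=
    fun he g => Subgroup.mem_center_iff.1 he g
  rw [(comm hc y).symm.mul_inv, (comm hd z).symm.mul_inv, (comm hb w).mul_mul_mul_comm,
    ((comm hc (w * x)).inv_right).mul_mul_mul_comm,
    ((comm hd (w * x * y⁻¹)).inv_right).mul_mul_mul_comm]

theorem mem_center_of_conj_eq {a b : G} (h : MulAut.conj a = MulAut.conj b) :
    a * b⁻¹ ∈ Subgroup.center G := by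
  rw [Subgroup.mem_center_iff]
  intro g
  have := congrArg (fun φ : MulAut G => φ (b⁻¹ * g * b)) h
  simp only [MulAut.conj_apply] at this
  have h2 : a * b⁻¹ * g = (a * (b⁻¹ * g * b) * a⁻¹) * (a * b⁻¹) := by group
  rw [h2, this]
  group

theorem conj_triple {s : P → MulAut G} {σ : P → P → G}
    (hσ : ∀ x y : P, s x * s y = MulAut.conj (σ x y) * s (x * y)) (x y z : P) :
    MulAut.conj (s x (σ y z) * σ x (y * z)) = MulAut.conj (σ x y * σ (x * y) z) := by
  apply mul_right_cancel (b := s (x * y * z))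
  have hc : MulAut.conj (s x (σ y z)) = s x * MulAut.conj (σ y z) * (s x)⁻¹ := by
    ext g
    simp [MulAut.conj_apply]
  calc MulAut.conj (s x (σ y z) * σ x (y * z)) * s (x * y * z)
      = MulAut.conj (s x (σ y z)) * (s x * s (y * z)) := by
        rw [map_mul, hσ x (y * z), mul_assoc, mul_assoc x]
    _ = s x * (s y * s z) := by
        rw [hc, hσ y z]
        group
    _ = MulAut.conj (σ x y * σ (x * y) z) * s (x * y * z) := by
        rw [← mul_assoc, hσ x y, mul_assoc, hσ (x * y) z, map_mul, ← mul_assoc]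

/-- A Schreier factor set: an automorphism-valued function together with an unnormalized
nonabelian `2`-cocycle for it. -/
structure FactorSet (P G : Type*) [Group P] [Group G] where
  /-- the automorphism attached to an element of the quotient -/
  s : P → MulAut G
  /-- the nonabelian `2`-cocycle -/
  τ : P → P → G
  twist : ∀ x y : P, s x * s y = MulAut.conj (τ x y) * s (x * y)
  cocycle : ∀ x y z : P, s x (τ y z) * τ x (y * z) = τ x y * τ (x * y) z

namespace FactorSet

variable (F : FactorSet P G)

theorem s_one : F.s 1 = MulAut.conj (F.τ 1 1) := by
  have h := F.twist 1 1
  rw [mul_one] at h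
  exact mul_right_cancel h

theorem s_one_apply (g : G) : F.s 1 g = F.τ 1 1 * g * (F.τ 1 1)⁻¹ := by
  rw [s_one, MulAut.conj_apply]

theorem twist_apply (x y : P) (g : G) :
    F.s x (F.s y g) = F.τ x y * F.s (x * y) g * (F.τ x y)⁻¹ := by
  rw [← MulAut.mul_apply, F.twist, MulAut.mul_apply, MulAut.conj_apply]

theorem τ_one_left (z : P) : F.τ 1 z = F.τ 1 1 := by
  have h := F.cocycle 1 1 z
  rw [one_mul, one_mul, F.s_one_apply] at h
  have h2 := mul_right_cancel h
  rw [mul_assoc] at h2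
  exact mul_inv_eq_one.1 (mul_eq_left.1 h2)

theorem τ_one_right (y : P) : F.s y (F.τ 1 1) = F.τ y 1 := by
  have h := F.cocycle y 1 1
  rw [one_mul, mul_one] at h
  exact mul_right_cancel h

/-- The total space of the extension determined by a factor set. It is a copy of `G × P`, kept as a
separate type because its multiplication is not the componentwise one. -/
@[ext]
structure Total (F : FactorSet P G) where
  /-- the component in the kernel -/
  fst : G
  /-- the component in the quotient -/
  snd : P

instance : Mul F.Total := ⟨fun a b => ⟨a.fst * F.s a.snd b.fst * F.τ a.snd b.snd, a.snd * b.snd⟩⟩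

instance : One F.Total := ⟨⟨(F.τ 1 1)⁻¹, 1⟩⟩

instance : Inv F.Total :=
  ⟨fun a => ⟨(F.τ 1 1)⁻¹ * (F.τ a.snd⁻¹ a.snd)⁻¹ * (F.s a.snd⁻¹ a.fst)⁻¹, a.snd⁻¹⟩⟩

theorem mul_def (a b : F.Total) :
    a * b = ⟨a.fst * F.s a.snd b.fst * F.τ a.snd b.snd, a.snd * b.snd⟩ := rfl

theorem one_def : (1 : F.Total) = ⟨(F.τ 1 1)⁻¹, 1⟩ := rfl

theorem inv_def (a : F.Total) :
    a⁻¹ = ⟨(F.τ 1 1)⁻¹ * (F.τ a.snd⁻¹ a.snd)⁻¹ * (F.s a.snd⁻¹ a.fst)⁻¹, a.snd⁻¹⟩ := rfl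

instance : Group F.Total :=
  Group.ofLeftAxioms
    (by
      rintro ⟨g, x⟩ ⟨h, y⟩ ⟨k, z⟩
      simp only [mul_def, Total.mk.injEq, mul_assoc, and_true, map_mul, F.twist_apply]
      have h3 := F.cocycle x y z
      simp only [h3, inv_mul_cancel_left])
    (by
      rintro ⟨g, x⟩
      simp [mul_def, one_def, F.s_one_apply, F.τ_one_left, mul_assoc])
    (by
      rintro ⟨g, x⟩
      simp [mul_def, one_def, inv_def, mul_assoc])

/-- The embedding of the kernel into the total space. -/
def incl : G →* F.Total where
  toFun g := ⟨g * (F.τ 1 1)⁻¹, 1⟩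
  map_one' := by simp [one_def]
  map_mul' g h := by simp [mul_def, F.s_one_apply, mul_assoc]

/-- The projection of the total space onto the quotient. -/
def proj : F.Total →* P where
  toFun a := a.snd
  map_one' := rfl
  map_mul' _ _ := rfl

theorem incl_injective : Function.Injective F.incl := by
  intro g h e
  exact mul_right_cancel (congrArg Total.fst e)

theorem proj_surjective : Function.Surjective F.proj := fun x => ⟨⟨1, x⟩, rfl⟩

theorem ker_proj : F.proj.ker = F.incl.range := by
  ext ⟨g, x⟩
  constructor
  · intro h
    have hx : x = 1 := h
    subst hx
    exact ⟨g * F.τ 1 1, by simp [incl]⟩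
  · rintro ⟨k, hk⟩
    exact (congrArg Total.snd hk).symm

/-- Conjugation by `(h, y)` in the total space acts on the kernel as `conj h * s y`. -/
theorem eq_of_conj (b : F.Total) (φ : MulAut G)
    (hφ : ∀ g : G, F.incl (φ g) = b * F.incl g * b⁻¹) :
    φ = MulAut.conj b.fst * F.s b.snd := by
  ext g
  have h := congrArg Total.fst (eq_mul_inv_iff_mul_eq.1 (hφ g))
  simp only [incl, MonoidHom.coe_mk, OneHom.coe_mk, mul_def, F.s_one_apply, F.τ_one_left,
    map_mul, map_inv, F.τ_one_right, mul_assoc, inv_mul_cancel_left, inv_mul_cancel,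
    mul_one] at h
  rw [MulAut.mul_apply, MulAut.conj_apply, ← h]
  group

end FactorSet

/-- In an extension whose conjugation class is `η`, an automorphism `ψ` in the class `η x` is
conjugation by some element over `x`: a lift of `x` realizes `ψ` up to an inner automorphism,
which is then absorbed by multiplying the lift by an element of the kernel. -/
theorem exists_lift {B : Type*} [Group B]
    (η : P →* MulAut G ⧸ (MulAut.conj (G := G)).range) (κ : G →* B) (π : B →* P)
    (hκ : Function.Injective κ) (hπ : Function.Surjective π) (hker : π.ker = κ.range)
    (hB : ∀ (b : B) (φ : MulAut G), (∀ g : G, κ (φ g) = b * κ g * b⁻¹) →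
      η (π b) = QuotientGroup.mk φ)
    (x : P) (ψ : MulAut G) (hψ : QuotientGroup.mk ψ = η x) :
    ∃ t : B, π t = x ∧ ∀ g, κ (ψ g) = t * κ g * t⁻¹ := by
  obtain ⟨b, rfl⟩ := hπ x
  have : κ.range.Normal := hker ▸ inferInstance
  let e := MonoidHom.ofInjective hκ
  let φ : MulAut G := (e.trans (MulAut.conjNormal b)).trans e.symm
  have hφ : ∀ g : G, κ (φ g) = b * κ g * b⁻¹ := by
    intro g
    have h1 : κ (φ g) = (e (φ g) : B) := rfl
    have h2 : e (φ g) = MulAut.conjNormal b (e g) := e.apply_symm_apply _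
    rw [h1, h2, MulAut.conjNormal_apply]
    rfl
  have h := hψ.trans (hB b φ hφ)
  obtain ⟨k, hk⟩ := QuotientGroup.eq.1 h.symm
  have hψ' : ψ = φ * MulAut.conj k := by rw [hk, mul_inv_cancel_left]
  have hk1 : π (κ k) = 1 := by
    rw [← MonoidHom.mem_ker, hker]
    exact ⟨k, rfl⟩
  refine ⟨b * κ k, by rw [map_mul, hk1, mul_one], fun g => ?_⟩
  rw [hψ', MulAut.mul_apply, hφ, MulAut.conj_apply, map_mul, map_mul, map_inv]
  group

/-- An extension with conjugation class `η` yields, for any choice `s` of representatives of `η`,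
a factor set with automorphisms `s`. -/
theorem exists_factorSet {B : Type*} [Group B]
    (η : P →* MulAut G ⧸ (MulAut.conj (G := G)).range) (κ : G →* B) (π : B →* P)
    (hκ : Function.Injective κ) (hπ : Function.Surjective π) (hker : π.ker = κ.range)
    (hB : ∀ (b : B) (φ : MulAut G), (∀ g : G, κ (φ g) = b * κ g * b⁻¹) →
      η (π b) = QuotientGroup.mk φ)
    (s : P → MulAut G) (hs : ∀ x : P, QuotientGroup.mk (s x) = η x) :
    ∃ F : FactorSet P G, F.s = s := by
  choose t ht hts using fun x => exists_lift η κ π hκ hπ hker hB x (s x) (hs x)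
  have hex : ∀ x y : P, ∃ g : G, κ g = t x * t y * (t (x * y))⁻¹ := by
    intro x y
    have : t x * t y * (t (x * y))⁻¹ ∈ π.ker := by
      simp [MonoidHom.mem_ker, ht]
    rw [hker] at this
    exact this
  choose τ hτ using hex
  refine ⟨⟨s, τ, fun x y => ?_, fun x y z => ?_⟩, rfl⟩
  · ext g
    apply hκ
    simp only [MulAut.mul_apply, MulAut.conj_apply, map_mul, map_inv, hts, hτ]
    group
  · apply hκ
    simp only [map_mul, hts, hτ, mul_assoc]
    group

end

end EilenbergMacLane

open EilenbergMacLane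

/-- (Eilenberg–MacLane) Let `η : Π → Out(G)` be an abstract kernel. Choose `s : Π → Aut(G)`
with `π (s x) = η x` and `σ : Π × Π → G` with `s x ∘ s y = c (σ (x, y)) ∘ s (x * y)`, where
`c g` is conjugation by `g`. The function
`f (x, y, z) = s x (σ (y, z)) * σ (x, y*z) * σ (x*y, z)⁻¹ * σ (x, y)⁻¹`
takes values in the centre `Z(G)`, and there exists a group extension
`1 → G → B → Π → 1` with induced conjugation class `η` if and only if `f` is a
`3`-coboundary: there is `ρ : Π × Π → Z(G)` with
`f (x, y, z) = (x • ρ (y, z)) * ρ (x, y*z) * ρ (x*y, z)⁻¹ * ρ (x, y)⁻¹`,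
where `x • z = s x z` is the `Π`-module structure of `Z(G)` induced by `η`. -/
theorem eilenberg_maclane_obstruction
    {P : Type u} {G : Type v} [Group P] [Group G]
    (η : P →* MulAut G ⧸ (MulAut.conj (G := G)).range)
    (s : P → MulAut G) (hs : ∀ x : P, QuotientGroup.mk (s x) = η x)
    (σ : P → P → G) (hσ : ∀ x y : P, s x * s y = MulAut.conj (σ x y) * s (x * y))
    (f : P → P → P → G)
    (hf : ∀ x y z : P, f x y z = s x (σ y z) * σ x (y * z) * (σ (x * y) z)⁻¹ * (σ x y)⁻¹) :
    (∀ x y z : P, f x y z ∈ Subgroup.center G) ∧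
    ((∃ (B : Type (max u v)) (_ : Group B) (κ : G →* B) (π : B →* P),
        Function.Injective κ ∧ Function.Surjective π ∧ π.ker = κ.range ∧
        ∀ (b : B) (φ : MulAut G), (∀ g : G, κ (φ g) = b * κ g * b⁻¹) →
          η (π b) = QuotientGroup.mk φ) ↔
      (∃ ρ : P → P → G, (∀ x y : P, ρ x y ∈ Subgroup.center G) ∧
        ∀ x y z : P,
          f x y z = s x (ρ y z) * ρ x (y * z) * (ρ (x * y) z)⁻¹ * (ρ x y)⁻¹)) := by
  refine ⟨fun x y z => ?_, ?_, ?_⟩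
  · have h := mem_center_of_conj_eq (conj_triple hσ x y z)
    rwa [mul_inv_rev, ← mul_assoc, ← hf] at h
  · rintro ⟨B, _, κ, π, hκ, hπ, hker, hB⟩
    obtain ⟨F, rfl⟩ := exists_factorSet η κ π hκ hπ hker hB s hs
    have hρ : ∀ x y, σ x y * (F.τ x y)⁻¹ ∈ Subgroup.center G := fun x y =>
      mem_center_of_conj_eq (mul_right_cancel ((hσ x y).symm.trans (F.twist x y)))
    refine ⟨fun x y => σ x y * (F.τ x y)⁻¹, hρ, fun x y z => ?_⟩
    have h := coboundary_mul (a := F.s x (σ y z * (F.τ y z)⁻¹)) (w := F.s x (F.τ y z))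
      (x := F.τ x (y * z)) (y := F.τ (x * y) z) (z := F.τ x y)
      (hρ x (y * z)) (hρ (x * y) z) (hρ x y)
    rw [← map_mul, F.cocycle] at h
    simpa only [inv_mul_cancel_right, mul_inv_cancel_right, mul_inv_cancel, mul_one, ← hf] using h
  · rintro ⟨ρ, hρ, hfρ⟩
    let F : FactorSet P G :=
      { s := s
        τ := fun x y => (ρ x y)⁻¹ * σ x y
        twist := fun x y => by
          have hc : MulAut.conj (ρ x y)⁻¹ = 1 := by
            ext g
            rw [MulAut.conj_apply, ← Subgroup.mem_center_iff.1 (inv_mem (hρ x y)) g]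
            simp
          rw [hσ, map_mul, hc, one_mul]
        cocycle := fun x y z => by
          have h := coboundary_mul (a := s x (ρ y z)) (w := s x ((ρ y z)⁻¹ * σ y z))
            (x := (ρ x (y * z))⁻¹ * σ x (y * z)) (y := (ρ (x * y) z)⁻¹ * σ (x * y) z)
            (z := (ρ x y)⁻¹ * σ x y) (hρ x (y * z)) (hρ (x * y) z) (hρ x y)
          rw [← map_mul] at h
          simp only [mul_inv_cancel_left] at h
          rw [← hf, ← hfρ] at h
          have h1 := left_eq_mul.1 h
          rwa [mul_inv_eq_one, mul_inv_eq_iff_eq_mul] at h1 }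
    refine ⟨F.Total, inferInstance, F.incl, F.proj, F.incl_injective, F.proj_surjective,
      F.ker_proj, fun b φ hφ => ?_⟩
    -- `φ` and `s b.snd` differ by an inner automorphism, hence agree in `Out(G)`.
    rw [F.eq_of_conj b φ hφ, QuotientGroup.mk_mul,
      (QuotientGroup.eq_one_iff (N := (MulAut.conj (G := G)).range) _).2 ⟨b.fst, rfl⟩, one_mul]
    exact (hs b.snd).symm
end
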